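/- arXiv:2507.04242 — 2 statements merged into one kernel-verified Lean document; each statement's English description precedes it below -/
import Mathlib

section
/- Let D ⊂ ℝ² be an open and bounded set such that ℝ² \ D̄ is connected, and let k ∈ ℂ be such that k is not a non-positive real number (i.e., it is not the case that Im k = 0 and Re k ≤ 0). Let u : ℝ² → ℂ be twice continuously differentiable on ℝ² \ D̄ and satisfy the Helmholtz equation Δu + k²u = 0 on ℝ² \ D̄. If lim_{r→∞} e^{2|Im k| r} ∫_{|x|=r} |u(x)|² ds(x) = 0, then u = 0 on ℝ² \ D̄. (Generalized Rellich's Lemma I, two dimensions.) -/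
open MeasureTheory

/-- The Laplacian of a complex-valued function on `ℝ²`. -/
noncomputable def laplacian2 (u : EuclideanSpace ℝ (Fin 2) → ℂ)
    (x : EuclideanSpace ℝ (Fin 2)) : ℂ :=
  ∑ i : Fin 2,
    fderiv ℝ (fun y => fderiv ℝ u y (EuclideanSpace.single i (1 : ℝ))) x
      (EuclideanSpace.single i (1 : ℝ))

/-!
Far out, the angular Fourier coefficients of `u` solve Bessel's equation in the radius, so `√r`
times such a coefficient is a perturbation of a solution of `w'' + k² w = 0` by the integrable
potential `(n² - 1/4) / r²`. Decay faster than `exp (-|Im k| r)` kills both the growing and the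
decaying exponential mode at infinity, and a contraction estimate near infinity then forces the
coefficient to vanish. Hence `u` vanishes far out. The same equation for the Fourier coefficients
on small circles gives unique continuation from the neighbourhood of a point to a ball, and
connectedness does the rest.
-/

open Set Filter Topology

section HalfLine

variable {E : Type*} [NormedAddCommGroup E] [NormedSpace ℝ E]

lemma eq_zero_of_hasDerivAt_clm_apply {A : ℝ → E →L[ℝ] E} {y : ℝ → E} {a b : ℝ}
    (hA : ContinuousOn A (uIcc a b)) (hy : ∀ t ∈ uIcc a b, HasDerivAt y (A t (y t)) t)
    (ha : y a = 0) : y b = 0 := by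
  obtain ⟨K, hK⟩ := isCompact_uIcc.exists_bound_of_continuousOn hA
  have lipschitz : ∀ t ∈ uIcc a b, LipschitzOnWith K.toNNReal (A t) univ := fun t ht =>
    ((A t).lipschitz.weaken (norm_toNNReal (a := A t) ▸
      Real.toNNReal_le_toNNReal (hK t ht))).lipschitzOnWith
  have y_continuousOn : ContinuousOn y (uIcc a b) := fun t ht =>
    (hy t ht).continuousAt.continuousWithinAt
  have hasDerivAt_zero : ∀ t, HasDerivAt (fun _ => (0 : E)) (A t 0) t := fun t => by
    simpa only [map_zero] using hasDerivAt_const t (0 : E)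
  rcases le_total a b with hab | hab
  · rw [uIcc_of_le hab] at hy lipschitz y_continuousOn
    exact ODE_solution_unique_of_mem_Icc_right (v := fun t => A t)
      (fun t ht => lipschitz t (Ico_subset_Icc_self ht)) y_continuousOn
      (fun t ht => (hy t (Ico_subset_Icc_self ht)).hasDerivWithinAt) (fun _ _ => mem_univ _)
      continuousOn_const (fun t _ => (hasDerivAt_zero t).hasDerivWithinAt) (fun _ _ => mem_univ _)
      ha (right_mem_Icc.2 hab)
  · rw [uIcc_of_ge hab] at hy lipschitz y_continuousOn
    exact ODE_solution_unique_of_mem_Icc_left (v := fun t => A t)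
      (fun t ht => lipschitz t (Ioc_subset_Icc_self ht)) y_continuousOn
      (fun t ht => (hy t (Ioc_subset_Icc_self ht)).hasDerivWithinAt) (fun _ _ => mem_univ _)
      continuousOn_const (fun t _ => (hasDerivAt_zero t).hasDerivWithinAt) (fun _ _ => mem_univ _)
      ha (left_mem_Icc.2 hab)

lemma eq_zero_of_tendsto_of_tendsto_deriv {f f' : ℝ → E} {c L : E}
    (hf : ∀ᶠ t in atTop, HasDerivAt f (f' t) t) (hc : Tendsto f atTop (𝓝 c))
    (hL : Tendsto f' atTop (𝓝 L)) : L = 0 := by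
  have increment_tendsto_zero : Tendsto (fun t => f (t + 1) - f t) atTop (𝓝 0) := by
    simpa using (hc.comp (tendsto_atTop_add_const_right _ 1 tendsto_id)).sub hc
  suffices Tendsto (fun t => f (t + 1) - f t) atTop (𝓝 L) from
    tendsto_nhds_unique this increment_tendsto_zero
  refine Metric.tendsto_nhds.2 fun ε hε => ?_
  have deriv_near : ∀ᶠ t in atTop, HasDerivAt f (f' t) t ∧ ‖f' t - L‖ ≤ ε / 2 := by
    filter_upwards [hf, Metric.tendsto_nhds.1 hL (ε / 2) (by positivity)] with t ht hLt
    exact ⟨ht, (dist_eq_norm (f' t) L ▸ hLt).le⟩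
  obtain ⟨T, hT⟩ := eventually_atTop.1 deriv_near
  filter_upwards [eventually_ge_atTop T] with t ht
  have mean_value := norm_image_sub_le_of_norm_deriv_le_segment'
    (f := fun s => f s - s • L) (f' := fun s => f' s - L) (a := t) (b := t + 1) (C := ε / 2)
    (fun s hs => by
      simpa using ((hT s (ht.trans hs.1)).1.fun_sub
        ((hasDerivAt_id s).smul_const L)).hasDerivWithinAt)
    (fun s hs => (hT s (ht.trans hs.1)).2) (t + 1) (by simp)
  have increment_eq : f (t + 1) - (t + 1) • L - (f t - t • L) = f (t + 1) - f t - L := by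
    module
  rw [increment_eq] at mean_value
  rw [dist_eq_norm]
  linarith

variable [CompleteSpace E]

lemma integrableOn_of_hasDerivAt_of_norm_le {F F' : ℝ → E} {g : ℝ → ℝ} {s : Set ℝ}
    (hs : MeasurableSet s) (hF : ∀ t ∈ s, HasDerivAt F (F' t) t) (hg : IntegrableOn g s)
    (hle : ∀ t ∈ s, ‖F' t‖ ≤ g t) : IntegrableOn F' s := by
  have F'_measurable : AEStronglyMeasurable F' (volume.restrict s) :=
    (aestronglyMeasurable_deriv F _).congr <|
      (ae_restrict_iff' hs).2 <| .of_forall fun t ht => (hF t ht).deriv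
  exact hg.mono' F'_measurable <| (ae_restrict_iff' hs).2 <| .of_forall hle

lemma exists_tendsto_atTop_of_norm_deriv_le {F F' : ℝ → E} {g : ℝ → ℝ} {a : ℝ}
    (hF : ∀ t ∈ Ioi a, HasDerivAt F (F' t) t) (hg : IntegrableOn g (Ioi a))
    (hle : ∀ t ∈ Ioi a, ‖F' t‖ ≤ g t) : ∃ L, Tendsto F atTop (𝓝 L) :=
  ⟨_, tendsto_limUnder_of_hasDerivAt_of_integrableOn_Ioi hF
    (integrableOn_of_hasDerivAt_of_norm_le measurableSet_Ioi hF hg hle)⟩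

lemma norm_le_setIntegral_Ioi_of_tendsto_zero {F F' : ℝ → E} {g : ℝ → ℝ} {a r : ℝ}
    (hF : ∀ t ∈ Ioi a, HasDerivAt F (F' t) t) (hF0 : Tendsto F atTop (𝓝 0)) (hr : a < r)
    (hg : IntegrableOn g (Ioi r)) (hle : ∀ t ∈ Ioi r, ‖F' t‖ ≤ g t) :
    ‖F r‖ ≤ ∫ t in Ioi r, g t := by
  have hF' : ∀ t ∈ Ioi r, HasDerivAt F (F' t) t := fun t ht => hF t (hr.trans ht)
  have F'_integral : ∫ t in Ioi r, F' t = 0 - F r :=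
    integral_Ioi_of_hasDerivAt_of_tendsto (hF r hr).continuousAt.continuousWithinAt hF'
      (integrableOn_of_hasDerivAt_of_norm_le measurableSet_Ioi hF' hg hle) hF0
  calc ‖F r‖ = ‖∫ t in Ioi r, F' t‖ := by rw [F'_integral, zero_sub, norm_neg]
    _ ≤ ∫ t in Ioi r, g t :=
      norm_integral_le_of_norm_le hg <|
        (ae_restrict_iff' measurableSet_Ioi).2 <| .of_forall hle

end HalfLine

section SecondOrderODE

variable {E : Type*} [NormedAddCommGroup E] [NormedSpace ℂ E]

/-- On `s`, the function `f` has derivative `f'` and solves the linear second order equation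
`f'' = p f' + q f`. The derivative is carried along so that the equation reads as a first order
system for the pair `(f, f')`. -/
structure SolvesLinearODE (p q : ℝ → ℂ) (s : Set ℝ) (f f' : ℝ → E) : Prop where
  hasDerivAt : ∀ r ∈ s, HasDerivAt f (f' r) r
  hasDerivAt_deriv : ∀ r ∈ s, HasDerivAt f' (p r • f' r + q r • f r) r

namespace SolvesLinearODE

variable {p q : ℝ → ℂ} {s : Set ℝ} {f f' : ℝ → E} {r₀ r : ℝ}

lemma eq_zero (h : SolvesLinearODE p q s f f') (hs : s.OrdConnected) (hp : ContinuousOn p s)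
    (hq : ContinuousOn q s) (hr₀ : r₀ ∈ s) (hf : f r₀ = 0) (hf' : f' r₀ = 0) (hr : r ∈ s) :
    f r = 0 := by
  let system : ℝ → E × E →L[ℝ] E × E := fun t =>
    (ContinuousLinearMap.snd ℝ E E).prod
      (p t • ContinuousLinearMap.snd ℝ E E + q t • ContinuousLinearMap.fst ℝ E E)
  have system_continuousOn : ContinuousOn system s :=
    (ContinuousLinearMap.prodₗᵢ (𝕜 := ℝ) (E := E × E) (F := E) (G := E)
      ℝ).continuous.comp_continuousOn <| continuousOn_const.prodMk <|
        (hp.smul continuousOn_const).add (hq.smul continuousOn_const)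
  have interval_subset : uIcc r₀ r ⊆ s := hs.uIcc_subset hr₀ hr
  exact congrArg Prod.fst <| eq_zero_of_hasDerivAt_clm_apply (y := fun t => (f t, f' t))
    (system_continuousOn.mono interval_subset)
    (fun t ht => (h.hasDerivAt t (interval_subset ht)).prodMk
      (h.hasDerivAt_deriv t (interval_subset ht)))
    (Prod.ext hf hf')

lemma eq_zero_of_eventuallyEq_zero (h : SolvesLinearODE p q s f f') (hs : s.OrdConnected)
    (hp : ContinuousOn p s) (hq : ContinuousOn q s) (hr₀ : r₀ ∈ s) (hf : f =ᶠ[𝓝 r₀] 0)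
    (hr : r ∈ s) : f r = 0 :=
  h.eq_zero hs hp hq hr₀ hf.eq_of_nhds
    (((h.hasDerivAt r₀ hr₀).congr_of_eventuallyEq hf.symm).unique (hasDerivAt_const r₀ 0)) hr

end SolvesLinearODE

variable {k : ℂ} {q : ℝ → ℂ} {w w' : ℝ → E} {s : Set ℝ} {a r M : ℝ}

/-- The coefficient of the wave `exp (i k r)` in `w`, up to the factor `2 i k`: if `w'` is the
derivative of `w` and `w'' = -k² w`, this is constant in `r`. The coefficient of `exp (-i k r)` is
obtained by replacing `k` with `-k`. -/
noncomputable def waveAmplitude (k : ℂ) (w w' : ℝ → E) (r : ℝ) : E :=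
  Complex.exp (-(Complex.I * k * r)) • (w' r + (Complex.I * k) • w r)

lemma norm_exp_neg_I_mul (k : ℂ) (r : ℝ) :
    ‖Complex.exp (-(Complex.I * k * r))‖ = Real.exp (k.im * r) := by
  simp [Complex.norm_exp]

lemma norm_exp_neg_I_mul_neg_smul (k : ℂ) (r : ℝ) (v : E) :
    ‖Complex.exp (-(Complex.I * -k * r)) • v‖ =
      Real.exp (-(2 * k.im * r)) * ‖Complex.exp (-(Complex.I * k * r)) • v‖ := by
  rw [norm_smul, norm_smul, norm_exp_neg_I_mul, norm_exp_neg_I_mul, ← mul_assoc, ← Real.exp_add,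
    Complex.neg_im]
  ring_nf

lemma hasDerivAt_exp_neg_I_mul (k : ℂ) (r : ℝ) :
    HasDerivAt (fun r : ℝ => Complex.exp (-(Complex.I * k * r)))
      (Complex.exp (-(Complex.I * k * r)) * -(Complex.I * k)) r := by
  simpa using (((hasDerivAt_id (r : ℂ)).const_mul (Complex.I * k)).neg.cexp).comp_ofReal

lemma exp_smul_waveAmplitude_neg (k : ℂ) (w w' : ℝ → E) (r : ℝ) :
    Complex.exp (-(Complex.I * (2 * k) * r)) • waveAmplitude (-k) w w' r
      = waveAmplitude k w w' r -
          (2 * Complex.I * k) • Complex.exp (-(Complex.I * k * r)) • w r := by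
  have exp_mul_exp : Complex.exp (-(Complex.I * (2 * k) * r)) * Complex.exp (-(Complex.I * -k * r))
      = Complex.exp (-(Complex.I * k * r)) := by
    rw [← Complex.exp_add]; ring_nf
  rw [waveAmplitude, waveAmplitude, smul_smul, exp_mul_exp]
  module

lemma hasDerivAt_exp_smul_waveAmplitude_neg (hw : HasDerivAt w (w' r) r) :
    HasDerivAt (fun r : ℝ => Complex.exp (-(Complex.I * k * r)) • w r)
      (Complex.exp (-(Complex.I * (2 * k) * r)) • waveAmplitude (-k) w w' r) r := by
  refine ((hasDerivAt_exp_neg_I_mul k r).fun_smul hw).congr_deriv ?_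
  rw [exp_smul_waveAmplitude_neg, waveAmplitude]
  module

namespace SolvesLinearODE

lemma hasDerivAt_waveAmplitude (h : SolvesLinearODE 0 (fun r => q r - k ^ 2) s w w')
    (hr : r ∈ s) :
    HasDerivAt (waveAmplitude k w w') (q r • Complex.exp (-(Complex.I * k * r)) • w r) r := by
  have hw'' := h.hasDerivAt_deriv r hr
  refine ((hasDerivAt_exp_neg_I_mul k r).fun_smul
    (hw''.fun_add ((h.hasDerivAt r hr).fun_const_smul (Complex.I * k)))).congr_deriv ?_
  have sq_eq : k ^ 2 = -(Complex.I * k * (Complex.I * k)) := by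
    linear_combination k ^ 2 * Complex.I_sq
  rw [Pi.zero_apply, sq_eq]
  module

variable [CompleteSpace E]

lemma tendsto_waveAmplitude (h : SolvesLinearODE 0 (fun r => q r - k ^ 2) (Ioi a) w w')
    (hk : 0 ≤ k.im) (hq : IntegrableOn q (Ioi a))
    (hw : Tendsto (fun r : ℝ => Complex.exp (-(Complex.I * k * r)) • w r) atTop (𝓝 0)) :
    Tendsto (waveAmplitude k w w') atTop (𝓝 0) ∧ Tendsto (waveAmplitude (-k) w w') atTop (𝓝 0) := by
  obtain ⟨L, hL⟩ : ∃ L, Tendsto (waveAmplitude k w w') atTop (𝓝 L) := by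
    obtain ⟨b, hb⟩ := eventually_atTop.1 (hw.norm.eventually_le_const (norm_zero.trans_lt one_pos))
    have Ioi_subset : Ioi (max a b) ⊆ Ioi a := Ioi_subset_Ioi (le_max_left a b)
    refine exists_tendsto_atTop_of_norm_deriv_le
      (fun r hr => h.hasDerivAt_waveAmplitude (Ioi_subset hr)) (hq.mono_set Ioi_subset).norm
      fun r hr => ?_
    rw [norm_smul]
    exact mul_le_of_le_one_right (norm_nonneg _) (hb r ((le_max_right a b).trans (mem_Ioi.1 hr).le))
  have deriv_tendsto : Tendsto
      (fun r : ℝ => Complex.exp (-(Complex.I * (2 * k) * r)) • waveAmplitude (-k) w w' r)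
      atTop (𝓝 L) := by
    simpa only [exp_smul_waveAmplitude_neg, smul_zero, sub_zero]
      using hL.sub (hw.const_smul (2 * Complex.I * k))
  have L_eq_zero : L = 0 := eq_zero_of_tendsto_of_tendsto_deriv
    ((eventually_gt_atTop a).mono fun r hr =>
      hasDerivAt_exp_smul_waveAmplitude_neg (h.hasDerivAt r hr)) hw deriv_tendsto
  rw [L_eq_zero] at hL deriv_tendsto
  refine ⟨hL, squeeze_zero_norm' ?_ (tendsto_zero_iff_norm_tendsto_zero.1 deriv_tendsto)⟩
  filter_upwards [eventually_ge_atTop 0] with r hr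
  rw [norm_smul, norm_exp_neg_I_mul, show (2 * k).im = 2 * k.im by simp]
  exact le_mul_of_one_le_left (norm_nonneg _) (Real.one_le_exp (by positivity))

lemma norm_waveAmplitude_le (h : SolvesLinearODE 0 (fun r => q r - k ^ 2) (Ioi a) w w')
    (hq : IntegrableOn q (Ioi a)) (hA : Tendsto (waveAmplitude k w w') atTop (𝓝 0)) (hr : a < r)
    (hM : ∀ t ∈ Ioi r, ‖Complex.exp (-(Complex.I * k * t)) • w t‖ ≤ M) :
    ‖waveAmplitude k w w' r‖ ≤ (∫ t in Ioi r, ‖q t‖) * M := by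
  rw [← integral_mul_const]
  refine norm_le_setIntegral_Ioi_of_tendsto_zero (fun t ht => h.hasDerivAt_waveAmplitude ht) hA hr
    ((hq.mono_set (Ioi_subset_Ioi hr.le)).norm.mul_const _) fun t ht => ?_
  rw [norm_smul]
  gcongr
  exact hM t ht

lemma norm_mul_norm_exp_smul_le (h : SolvesLinearODE 0 (fun r => q r - k ^ 2) (Ioi a) w w')
    (hk : 0 ≤ k.im) (hq : IntegrableOn q (Ioi a))
    (hw : Tendsto (fun r : ℝ => Complex.exp (-(Complex.I * k * r)) • w r) atTop (𝓝 0))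
    (hr : a < r) (hM : ∀ t ∈ Ioi r, ‖Complex.exp (-(Complex.I * k * t)) • w t‖ ≤ M) :
    ‖k‖ * ‖Complex.exp (-(Complex.I * k * r)) • w r‖ ≤ (∫ t in Ioi r, ‖q t‖) * M := by
  obtain ⟨outgoing_tendsto, incoming_tendsto⟩ := h.tendsto_waveAmplitude hk hq hw
  have h_neg : SolvesLinearODE 0 (fun r => q r - (-k) ^ 2) (Ioi a) w w' := by
    simpa only [neg_sq] using h
  have outgoing_le := h.norm_waveAmplitude_le hq outgoing_tendsto hr hM
  have incoming_le : ‖waveAmplitude (-k) w w' r‖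
      ≤ (∫ t in Ioi r, ‖q t‖) * (Real.exp (-(2 * k.im * r)) * M) := by
    refine h_neg.norm_waveAmplitude_le hq incoming_tendsto hr fun t ht => ?_
    rw [norm_exp_neg_I_mul_neg_smul]
    have r_le : r ≤ t := (mem_Ioi.1 ht).le
    exact mul_le_mul (Real.exp_le_exp.2 (by gcongr)) (hM t ht) (norm_nonneg _) (Real.exp_pos _).le
  -- The factor `exp (-2 k.im r)` in the bound for the incoming amplitude cancels the growing factor
  -- `exp (2 k.im r)` with which that amplitude enters here.
  suffices 2 * (‖k‖ * ‖Complex.exp (-(Complex.I * k * r)) • w r‖)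
      ≤ 2 * ((∫ t in Ioi r, ‖q t‖) * M) by linarith
  calc 2 * (‖k‖ * ‖Complex.exp (-(Complex.I * k * r)) • w r‖)
      = ‖(2 * Complex.I * k) • Complex.exp (-(Complex.I * k * r)) • w r‖ := by
        rw [norm_smul (2 * Complex.I * k)]; simp [mul_assoc]
    _ = ‖waveAmplitude k w w' r
          - Complex.exp (-(Complex.I * (2 * k) * r)) • waveAmplitude (-k) w w' r‖ := by
        rw [exp_smul_waveAmplitude_neg, sub_sub_cancel]
    _ ≤ ‖waveAmplitude k w w' r‖ + Real.exp (2 * k.im * r) * ‖waveAmplitude (-k) w w' r‖ := by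
        refine (norm_sub_le _ _).trans_eq ?_
        rw [norm_smul, norm_exp_neg_I_mul, show (2 * k).im = 2 * k.im by simp]
    _ ≤ (∫ t in Ioi r, ‖q t‖) * M
          + Real.exp (2 * k.im * r) *
            ((∫ t in Ioi r, ‖q t‖) * (Real.exp (-(2 * k.im * r)) * M)) := by
        gcongr
    _ = 2 * ((∫ t in Ioi r, ‖q t‖) * M) := by
        rw [Real.exp_neg]; field_simp; ring

lemma eventually_eq_zero_of_im_nonneg
    (h : SolvesLinearODE 0 (fun r => q r - k ^ 2) (Ioi a) w w') (hk₀ : k ≠ 0) (hk : 0 ≤ k.im)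
    (hq : IntegrableOn q (Ioi a))
    (hw : Tendsto (fun r : ℝ => Complex.exp (-(Complex.I * k * r)) • w r) atTop (𝓝 0)) :
    ∀ᶠ r in atTop, w r = 0 := by
  have hk_pos : 0 < ‖k‖ := norm_pos_iff.2 hk₀
  have tail_small : ∀ᶠ r in atTop, ∫ t in Ioi r, ‖q t‖ ≤ ‖k‖ / 2 :=
    (tendsto_integral_Ioi_zero tendsto_id).eventually_le_const (by positivity)
  obtain ⟨b, hb⟩ := eventually_atTop.1 <| (eventually_gt_atTop a).and <| tail_small.and <|
    hw.norm.eventually_le_const (norm_zero.trans_lt one_pos)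
  have halved : ∀ n : ℕ, ∀ r ≥ b, ‖Complex.exp (-(Complex.I * k * r)) • w r‖ ≤ (1 / 2) ^ n := by
    intro n
    induction n with
    | zero => simpa using fun r hr => (hb r hr).2.2
    | succ n ih =>
      intro r hr
      have := h.norm_mul_norm_exp_smul_le hk hq hw (hb r hr).1
        fun t ht => ih t (hr.le.trans (mem_Ioi.1 ht).le)
      refine le_of_mul_le_mul_left (this.trans ?_) hk_pos
      calc (∫ t in Ioi r, ‖q t‖) * (1 / 2) ^ n ≤ ‖k‖ / 2 * (1 / 2) ^ n := by
            gcongr; exact (hb r hr).2.1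
        _ = ‖k‖ * (1 / 2) ^ (n + 1) := by ring
  filter_upwards [eventually_ge_atTop b] with r hr
  have norm_nonpos : ‖Complex.exp (-(Complex.I * k * r)) • w r‖ ≤ 0 :=
    ge_of_tendsto' (tendsto_pow_atTop_nhds_zero_of_lt_one (by norm_num) (by norm_num))
      fun n => halved n r hr
  exact (smul_eq_zero.1 (norm_le_zero_iff.1 norm_nonpos)).resolve_left (Complex.exp_ne_zero _)

lemma eventually_eq_zero (h : SolvesLinearODE 0 (fun r => q r - k ^ 2) (Ioi a) w w')
    (hk₀ : k ≠ 0) (hq : IntegrableOn q (Ioi a))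
    (hw : Tendsto (fun r => Real.exp (|k.im| * r) * ‖w r‖) atTop (𝓝 0)) :
    ∀ᶠ r in atTop, w r = 0 := by
  wlog hk : 0 ≤ k.im generalizing k
  · exact this (k := -k) (by simpa only [neg_sq] using h) (neg_ne_zero.2 hk₀)
      (by simpa only [Complex.neg_im, abs_neg] using hw)
      (by simpa only [Complex.neg_im, Left.nonneg_neg_iff] using (not_le.1 hk).le)
  refine h.eventually_eq_zero_of_im_nonneg hk₀ hk hq (squeeze_zero_norm (fun r => ?_) hw)
  rw [norm_smul, norm_exp_neg_I_mul, abs_of_nonneg hk]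

end SolvesLinearODE

/-- On `s`, the function `f` has derivative `f'` and solves Bessel's equation of order `ν` in the
form `f'' + f' / r + (k² - ν² / r²) f = 0`, which arises from the Helmholtz equation in polar
coordinates. -/
abbrev SolvesBessel (ν k : ℂ) (s : Set ℝ) (f f' : ℝ → E) : Prop :=
  SolvesLinearODE (fun r => -(r : ℂ)⁻¹) (fun r => ν ^ 2 / r ^ 2 - k ^ 2) s f f'

namespace SolvesBessel

variable {ν : ℂ} {f f' : ℝ → E} {r₀ : ℝ}

lemma sqrt_smul (h : SolvesBessel ν k s f f') (hs : s ⊆ Ioi 0) :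
    SolvesLinearODE 0 (fun r => (ν ^ 2 - 1 / 4) / r ^ 2 - k ^ 2) s
      (fun r => (√r : ℂ) • f r) (fun r => (√r : ℂ) • f' r + (1 / (2 * √r) : ℂ) • f r) := by
  have sqrt_ne : ∀ r ∈ s, (√r : ℂ) ≠ 0 := fun r hr =>
    Complex.ofReal_ne_zero.2 (Real.sqrt_pos.2 (hs hr)).ne'
  have hasDerivAt_sqrt : ∀ r ∈ s, HasDerivAt (fun r : ℝ => (√r : ℂ)) (1 / (2 * √r)) r :=
    fun r hr => by simpa using (Real.hasDerivAt_sqrt (mem_Ioi.1 (hs hr)).ne').ofReal_comp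
  have hasDerivAt_inv_sqrt : ∀ r ∈ s,
      HasDerivAt (fun r : ℝ => (1 / (2 * √r) : ℂ)) (-(1 / (4 * (√r : ℂ) ^ 3))) r := fun r hr => by
    have hr0 := sqrt_ne r hr
    have := ((hasDerivAt_sqrt r hr).const_mul 2).fun_inv (mul_ne_zero two_ne_zero hr0)
    simp only [one_div]
    refine this.congr_deriv ?_
    field_simp
    norm_num
  constructor <;> intro r hr
  · exact (hasDerivAt_sqrt r hr).fun_smul (h.hasDerivAt r hr)
  · refine (((hasDerivAt_sqrt r hr).fun_smul (h.hasDerivAt_deriv r hr)).fun_add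
      ((hasDerivAt_inv_sqrt r hr).fun_smul (h.hasDerivAt r hr))).congr_deriv ?_
    have hr0 := sqrt_ne r hr
    have r_eq_sq : (r : ℂ) = (√r : ℂ) ^ 2 := by
      exact_mod_cast (Real.sq_sqrt (mem_Ioi.1 (hs hr)).le).symm
    simp only [r_eq_sq, Pi.zero_apply]
    match_scalars <;> field_simp <;> ring

lemma eq_zero_of_eventuallyEq_zero (h : SolvesBessel ν k s f f') (hs : s.OrdConnected)
    (hs₀ : s ⊆ Ioi 0) (hr₀ : r₀ ∈ s) (hf : f =ᶠ[𝓝 r₀] 0) (hr : r ∈ s) : f r = 0 := by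
  have ofReal_ne : ∀ r ∈ s, (r : ℂ) ≠ 0 := fun r hr =>
    Complex.ofReal_ne_zero.2 (mem_Ioi.1 (hs₀ hr)).ne'
  have ofReal_continuousOn : ContinuousOn (fun r : ℝ => (r : ℂ)) s :=
    Complex.continuous_ofReal.continuousOn
  exact SolvesLinearODE.eq_zero_of_eventuallyEq_zero h hs
    (ofReal_continuousOn.inv₀ ofReal_ne).neg
    ((continuousOn_const.div (ofReal_continuousOn.pow 2)
      fun r hr => pow_ne_zero 2 (ofReal_ne r hr)).sub continuousOn_const) hr₀ hf hr

lemma eq_zero_of_tendsto [CompleteSpace E] (h : SolvesBessel ν k (Ioi a) f f') (hk : k ≠ 0)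
    (ha : 0 < a)
    (hf : Tendsto (fun r => Real.exp (2 * |k.im| * r) * (r * ‖f r‖ ^ 2)) atTop (𝓝 0))
    (hr : a < r) : f r = 0 := by
  have Ioi_subset : Ioi a ⊆ Ioi 0 := Ioi_subset_Ioi ha.le
  have potential_integrable :
      IntegrableOn (fun r : ℝ => (ν ^ 2 - 1 / 4) / (r : ℂ) ^ 2) (Ioi a) := by
    have rpow_integrable := integrableOn_Ioi_rpow_of_lt (by norm_num : (-2 : ℝ) < -1) ha
    refine IntegrableOn.congr_fun (rpow_integrable.ofReal.const_mul (ν ^ 2 - 1 / 4))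
      (fun r hr => ?_) measurableSet_Ioi
    rw [Real.rpow_neg (ha.trans hr).le, Real.rpow_two]
    simp [div_eq_mul_inv]
  have sqrt_smul_tendsto :
      Tendsto (fun r : ℝ => Real.exp (|k.im| * r) * ‖(√r : ℂ) • f r‖) atTop (𝓝 0) := by
    refine (Real.sqrt_zero ▸ hf.sqrt).congr' ?_
    filter_upwards [eventually_ge_atTop 0] with r hr
    rw [norm_smul, Complex.norm_real, Real.norm_of_nonneg (Real.sqrt_nonneg r),
      Real.sqrt_mul (Real.exp_pos _).le, Real.sqrt_mul hr, Real.sqrt_sq (norm_nonneg _),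
      mul_assoc 2, two_mul, Real.exp_add, Real.sqrt_mul_self (Real.exp_pos _).le]
  have eventually_zero := (h.sqrt_smul Ioi_subset).eventually_eq_zero hk potential_integrable
    sqrt_smul_tendsto
  obtain ⟨b, hb⟩ := eventually_atTop.1 (eventually_zero.and (eventually_gt_atTop a))
  have f_eq_zero : f =ᶠ[𝓝 (b + 1)] 0 := by
    filter_upwards [lt_mem_nhds (lt_add_one b)] with t ht
    exact (smul_eq_zero.1 (hb t ht.le).1).resolve_left
      (Complex.ofReal_ne_zero.2 (Real.sqrt_pos.2 (ha.trans (hb t ht.le).2)).ne')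
  exact h.eq_zero_of_eventuallyEq_zero ordConnected_Ioi Ioi_subset
    (hb (b + 1) (by linarith)).2 f_eq_zero hr

end SolvesBessel

end SecondOrderODE

section FourierCoeffOn

variable {E : Type*} [NormedAddCommGroup E] [NormedSpace ℂ E] {a b : ℝ}

lemma intervalIntegrable_fourier_smul {f : ℝ → E} (n : ℤ) (T : ℝ)
    (hf : IntervalIntegrable f volume a b) :
    IntervalIntegrable (fun x => fourier n (x : AddCircle T) • f x) volume a b :=
  hf.continuousOn_smul ((map_continuous (fourier n)).comp
    (AddCircle.continuous_mk' T)).continuousOn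

lemma fourierCoeffOn_fun_add (hab : a < b) {f g : ℝ → E} (hf : IntervalIntegrable f volume a b)
    (hg : IntervalIntegrable g volume a b) (n : ℤ) :
    fourierCoeffOn hab (fun x => f x + g x) n =
      fourierCoeffOn hab f n + fourierCoeffOn hab g n := by
  simp only [fourierCoeffOn_eq_integral, smul_add]
  rw [intervalIntegral.integral_add (intervalIntegrable_fourier_smul _ _ hf)
    (intervalIntegrable_fourier_smul _ _ hg), smul_add]

lemma fourierCoeffOn_deriv (hab : a < b) {f f' : ℝ → ℂ} (hf : ∀ x ∈ uIcc a b, HasDerivAt f (f' x) x)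
    (hf' : IntervalIntegrable f' volume a b) (hfab : f a = f b) (n : ℤ) :
    fourierCoeffOn hab f' n = 2 * Real.pi * Complex.I * n / (b - a) * fourierCoeffOn hab f n := by
  have hba : (b - a : ℂ) ≠ 0 := by exact_mod_cast (sub_pos.2 hab).ne'
  rcases eq_or_ne n 0 with rfl | hn
  · simp [fourierCoeffOn_eq_integral, intervalIntegral.integral_eq_sub_of_hasDerivAt hf hf', hfab]
  · rw [fourierCoeffOn_of_hasDerivAt hab hn hf hf', hfab]
    have hn' : (n : ℂ) ≠ 0 := Int.cast_ne_zero.2 hn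
    have hpi : (Real.pi : ℂ) ≠ 0 := Complex.ofReal_ne_zero.2 Real.pi_ne_zero
    field_simp
    ring

lemma fourierCoeffOn_two_pi_deriv {f f' : ℝ → ℂ}
    (hf : ∀ x ∈ uIcc 0 (2 * Real.pi), HasDerivAt f (f' x) x)
    (hf' : IntervalIntegrable f' volume 0 (2 * Real.pi)) (hf₀ : f 0 = f (2 * Real.pi)) (n : ℤ) :
    fourierCoeffOn Real.two_pi_pos f' n =
      Complex.I * n * fourierCoeffOn Real.two_pi_pos f n := by
  have pi_ne : (Real.pi : ℂ) ≠ 0 := Complex.ofReal_ne_zero.2 Real.pi_ne_zero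
  rw [fourierCoeffOn_deriv Real.two_pi_pos hf hf' hf₀]
  push_cast
  field_simp
  ring

lemma hasDerivAt_fourierCoeffOn (hab : a < b) {s : Set ℝ} (hs : IsOpen s) {F F' : ℝ → ℝ → E}
    (hF : ∀ r ∈ s, ContinuousOn (F r) (uIcc a b))
    (hF' : ContinuousOn F'.uncurry (s ×ˢ uIcc a b))
    (hderiv : ∀ r ∈ s, ∀ x ∈ uIcc a b, HasDerivAt (fun r => F r x) (F' r x) r) (n : ℤ)
    {r : ℝ} (hr : r ∈ s) :
    HasDerivAt (fun r => fourierCoeffOn hab (F r) n) (fourierCoeffOn hab (F' r) n) r := by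
  simp only [fourierCoeffOn_eq_integral]
  refine HasDerivAt.fun_const_smul _ ?_
  obtain ⟨ε, hε, hball⟩ := Metric.nhds_basis_closedBall.mem_iff.1 (hs.mem_nhds hr)
  obtain ⟨C, hC⟩ := ((isCompact_closedBall r ε).prod isCompact_uIcc).exists_bound_of_continuousOn
    (hF'.mono (prod_mono hball subset_rfl))
  have F_integrable : ∀ r ∈ s, IntervalIntegrable (F r) volume a b :=
    fun r hr => (hF r hr).intervalIntegrable
  have F'_integrable : IntervalIntegrable (F' r) volume a b :=
    ((hF'.comp (continuousOn_const.prodMk continuousOn_id) fun x hx => ⟨hr, hx⟩ :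
      ContinuousOn (fun x => F' r x) (uIcc a b))).intervalIntegrable
  refine (intervalIntegral.hasDerivAt_integral_of_dominated_loc_of_deriv_le (bound := fun _ => C)
    (F := fun r x => fourier (-n) (x : AddCircle (b - a)) • F r x)
    (F' := fun r x => fourier (-n) (x : AddCircle (b - a)) • F' r x)
    (Metric.closedBall_mem_nhds r hε) ?_ (intervalIntegrable_fourier_smul _ _ (F_integrable r hr))
    (intervalIntegrable_fourier_smul _ _ F'_integrable).def'.aestronglyMeasurable ?_
    intervalIntegrable_const ?_).2
  · filter_upwards [hs.mem_nhds hr] with t ht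
    exact (intervalIntegrable_fourier_smul _ _ (F_integrable t ht)).def'.aestronglyMeasurable
  · refine .of_forall fun x hx t ht => ?_
    rw [norm_smul, fourier_apply, Circle.norm_coe, one_mul]
    exact hC (t, x) ⟨ht, uIoc_subset_uIcc hx⟩
  · exact .of_forall fun x hx t ht =>
      (hderiv t (hball ht) x (uIoc_subset_uIcc hx)).fun_const_smul _

lemma memLp_two_restrict_Ioc_of_continuousOn {f : ℝ → ℂ} (hf : ContinuousOn f (Icc a b)) :
    MemLp f 2 (volume.restrict (Ioc a b)) :=
  (memLp_two_iff_integrable_sq_norm ((hf.mono Ioc_subset_Icc_self).aestronglyMeasurable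
    measurableSet_Ioc)).2 ((hf.norm.pow 2).integrableOn_Icc.mono_set Ioc_subset_Icc_self)

lemma norm_sq_fourierCoeffOn_le (hab : a < b) {f : ℝ → ℂ}
    (hf : MemLp f 2 (volume.restrict (Ioc a b))) (n : ℤ) :
    ‖fourierCoeffOn hab f n‖ ^ 2 ≤ (b - a)⁻¹ * ∫ x in a..b, ‖f x‖ ^ 2 :=
  le_hasSum (hasSum_sq_fourierCoeffOn hab hf) n fun _ _ => by positivity

lemma eqOn_zero_of_fourierCoeffOn_eq_zero (hab : a < b) {f : ℝ → ℂ}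
    (hf : ContinuousOn f (Icc a b)) (h : ∀ n, fourierCoeffOn hab f n = 0) :
    EqOn f 0 (Icc a b) := by
  intro x hx
  by_contra hfx
  have parseval := hasSum_sq_fourierCoeffOn hab (memLp_two_restrict_Ioc_of_continuousOn hf)
  simp only [h, norm_zero, zero_pow two_ne_zero] at parseval
  have integral_pos : 0 < ∫ x in a..b, ‖f x‖ ^ 2 :=
    intervalIntegral.integral_pos hab (hf.norm.pow 2) (fun _ _ => by positivity)
      ⟨x, hx, pow_pos (norm_pos_iff.2 hfx) 2⟩
  exact (smul_pos (inv_pos.2 (sub_pos.2 hab)) integral_pos).ne' (parseval.unique hasSum_zero)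

end FourierCoeffOn

section PolarCoordinates

open InnerProductSpace Laplacian

variable {F : Type*} [NormedAddCommGroup F] [NormedSpace ℝ F] {f : ℂ → F} {c : ℂ} {r θ : ℝ}

lemma fderiv_fderiv_apply_add_mul_I (f : ℂ → F) (z w : ℂ) :
    fderiv ℝ (fderiv ℝ f) z w w + fderiv ℝ (fderiv ℝ f) z (w * Complex.I) (w * Complex.I) =
      ‖w‖ ^ 2 • Δ f z := by
  obtain ⟨a, b, rfl⟩ : ∃ a b : ℝ, w = a • (1 : ℂ) + b • Complex.I := ⟨w.re, w.im, by simp⟩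
  have mul_I_eq : (a • (1 : ℂ) + b • Complex.I) * Complex.I = (-b) • (1 : ℂ) + a • Complex.I := by
    apply Complex.ext <;> simp
  have norm_sq_eq : ‖a • (1 : ℂ) + b • Complex.I‖ ^ 2 = a ^ 2 + b ^ 2 := by
    rw [Complex.sq_norm, Complex.normSq_apply]
    simp [sq]
  rw [mul_I_eq, norm_sq_eq, laplacian_eq_iteratedFDeriv_complexPlane]
  simp only [iteratedFDeriv_two_apply, Matrix.cons_val_zero, Matrix.cons_val_one, map_add, map_smul,
    add_apply, smul_apply]
  module

lemma hasDerivAt_comp_circleMap_radius (hf : DifferentiableAt ℝ f (circleMap c r θ)) :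
    HasDerivAt (fun r => f (circleMap c r θ))
      (fderiv ℝ f (circleMap c r θ) (Complex.exp (θ * Complex.I))) r :=
  hf.hasFDerivAt.comp_hasDerivAt r <| by
    simpa only [Complex.ofReal_one, one_mul] using!
      ((hasDerivAt_id r).ofReal_comp.mul_const (Complex.exp (θ * Complex.I))).const_add c

lemma hasDerivAt_comp_circleMap_angle (hf : DifferentiableAt ℝ f (circleMap c r θ)) :
    HasDerivAt (fun θ => f (circleMap c r θ))
      (fderiv ℝ f (circleMap c r θ) (circleMap 0 r θ * Complex.I)) θ :=
  hf.hasFDerivAt.comp_hasDerivAt θ (hasDerivAt_circleMap c r θ)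

lemma hasDerivAt_fderiv_circleMap_radius
    (hf : DifferentiableAt ℝ (fderiv ℝ f) (circleMap c r θ)) :
    HasDerivAt (fun r => fderiv ℝ f (circleMap c r θ) (Complex.exp (θ * Complex.I)))
      (fderiv ℝ (fderiv ℝ f) (circleMap c r θ) (Complex.exp (θ * Complex.I))
        (Complex.exp (θ * Complex.I))) r := by
  simpa only [map_zero, add_zero] using
    (hasDerivAt_comp_circleMap_radius hf).clm_apply (hasDerivAt_const r _)

lemma hasDerivAt_fderiv_circleMap_angle
    (hf : DifferentiableAt ℝ (fderiv ℝ f) (circleMap c r θ)) :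
    HasDerivAt (fun θ => fderiv ℝ f (circleMap c r θ) (circleMap 0 r θ * Complex.I))
      (fderiv ℝ (fderiv ℝ f) (circleMap c r θ) (circleMap 0 r θ * Complex.I)
          (circleMap 0 r θ * Complex.I) -
        fderiv ℝ f (circleMap c r θ) (circleMap 0 r θ)) θ := by
  have hasDerivAt_tangent :
      HasDerivAt (fun θ => circleMap 0 r θ * Complex.I) (-circleMap 0 r θ) θ :=
    ((hasDerivAt_circleMap 0 r θ).mul_const Complex.I).congr_deriv <| by
      rw [mul_assoc, Complex.I_mul_I, mul_neg_one]
  simpa only [map_neg, ← sub_eq_add_neg] using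
    (hasDerivAt_comp_circleMap_angle hf).clm_apply hasDerivAt_tangent

lemma exists_circleMap_eq {z : ℂ} (hz : z ∈ Metric.sphere c r) :
    ∃ θ ∈ Icc 0 (2 * Real.pi), circleMap c r θ = z := by
  have : z ∈ Metric.sphere c |r| := by
    rwa [abs_of_nonneg (Metric.nonneg_of_mem_sphere hz)]
  rw [← image_circleMap_Ioc] at this
  exact this.imp fun θ hθ => ⟨Ioc_subset_Icc_self hθ.1, hθ.2⟩

end PolarCoordinates

/-- The `n`-th Fourier coefficient of the restriction of `u` to the circle of radius `r` about `c`,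
parametrized by the angle in `[0, 2π]`. -/
noncomputable def circleFourierCoeff (u : ℂ → ℂ) (c : ℂ) (n : ℤ) (r : ℝ) : ℂ :=
  fourierCoeffOn Real.two_pi_pos (fun θ => u (circleMap c r θ)) n

section CircleFourierCoeff

variable {u : ℂ → ℂ} {c : ℂ} {r : ℝ}

lemma continuous_comp_circleMap {X : Type*} [TopologicalSpace X] {g : ℂ → X} (hr : 0 ≤ r)
    (hg : ContinuousOn g (Metric.sphere c r)) : Continuous fun θ => g (circleMap c r θ) :=
  hg.comp_continuous (continuous_circleMap c r) (circleMap_mem_sphere c hr)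

lemma continuousOn_comp_circleMap {X : Type*} [TopologicalSpace X] {g : ℂ → X}
    {Ω : Set ℂ} {s : Set ℝ} (hg : ContinuousOn g Ω) (hs₀ : s ⊆ Ioi 0)
    (hsΩ : ∀ r ∈ s, Metric.sphere c r ⊆ Ω) :
    ContinuousOn (fun p : ℝ × ℝ => g (circleMap c p.1 p.2)) (s ×ˢ univ) :=
  hg.comp (by unfold circleMap; fun_prop) fun p hp =>
    hsΩ p.1 hp.1 (circleMap_mem_sphere c (mem_Ioi.1 (hs₀ hp.1)).le p.2)

lemma circleFourierCoeff_eq_zero (hr : 0 ≤ r) (hu : EqOn u 0 (Metric.sphere c r)) (n : ℤ) :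
    circleFourierCoeff u c n r = 0 := by
  have : (fun θ => u (circleMap c r θ)) = 0 := funext fun θ => hu (circleMap_mem_sphere c hr θ)
  simp [circleFourierCoeff, this, fourierCoeffOn_eq_integral]

lemma eqOn_zero_of_circleFourierCoeff_eq_zero (hu : ContinuousOn u (Metric.sphere c r))
    (h : ∀ n, circleFourierCoeff u c n r = 0) : EqOn u 0 (Metric.sphere c r) := by
  intro z hz
  obtain ⟨θ, hθ, rfl⟩ := exists_circleMap_eq hz
  exact eqOn_zero_of_fourierCoeffOn_eq_zero Real.two_pi_pos
    (continuous_comp_circleMap (Metric.nonneg_of_mem_sphere hz) hu).continuousOn h hθ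

end CircleFourierCoeff

section Helmholtz

open InnerProductSpace Laplacian

variable {E : Type*} [NormedAddCommGroup E] [InnerProductSpace ℝ E] [FiniteDimensional ℝ E]

/-- `u` is a classical (twice continuously differentiable) solution of the Helmholtz equation
`Δu + k²u = 0` on `Ω`. -/
structure HelmholtzOn (k : ℂ) (u : E → ℂ) (Ω : Set E) : Prop where
  contDiffOn : ContDiffOn ℝ 2 u Ω
  laplacian_add : ∀ x ∈ Ω, Δ u x + k ^ 2 * u x = 0

namespace HelmholtzOn

lemma mono {k : ℂ} {u : E → ℂ} {Ω Ω' : Set E} (h : HelmholtzOn k u Ω) (hΩ' : Ω' ⊆ Ω) :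
    HelmholtzOn k u Ω' :=
  ⟨h.contDiffOn.mono hΩ', fun x hx => h.laplacian_add x (hΩ' hx)⟩

variable {k c : ℂ} {u : ℂ → ℂ} {Ω : Set ℂ} {s : Set ℝ}

lemma differentiableAt (h : HelmholtzOn k u Ω) (hΩ : IsOpen Ω) {z : ℂ} (hz : z ∈ Ω) :
    DifferentiableAt ℝ u z :=
  (h.contDiffOn.contDiffAt (hΩ.mem_nhds hz)).differentiableAt two_ne_zero

lemma contDiffOn_fderiv (h : HelmholtzOn k u Ω) (hΩ : IsOpen Ω) :
    ContDiffOn ℝ 1 (fderiv ℝ u) Ω :=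
  h.contDiffOn.fderiv_of_isOpen hΩ (by norm_num)

lemma differentiableAt_fderiv (h : HelmholtzOn k u Ω) (hΩ : IsOpen Ω) {z : ℂ} (hz : z ∈ Ω) :
    DifferentiableAt ℝ (fderiv ℝ u) z :=
  ((h.contDiffOn_fderiv hΩ).contDiffAt (hΩ.mem_nhds hz)).differentiableAt one_ne_zero

lemma hasDerivAt_fderiv_angle {r θ : ℝ} (h : HelmholtzOn k u Ω) (hΩ : IsOpen Ω)
    (hz : circleMap c r θ ∈ Ω) :
    HasDerivAt (fun θ => fderiv ℝ u (circleMap c r θ) (circleMap 0 r θ * Complex.I))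
      (-r ^ 2 * fderiv ℝ (fderiv ℝ u) (circleMap c r θ) (Complex.exp (θ * Complex.I))
          (Complex.exp (θ * Complex.I)) +
        (-r * fderiv ℝ u (circleMap c r θ) (Complex.exp (θ * Complex.I)) +
        -(k ^ 2 * r ^ 2) * u (circleMap c r θ))) θ := by
  refine (hasDerivAt_fderiv_circleMap_angle
    (h.differentiableAt_fderiv hΩ hz)).congr_deriv ?_
  have laplacian_eq := fderiv_fderiv_apply_add_mul_I u (circleMap c r θ) (circleMap 0 r θ)
  have radial_eq : circleMap 0 r θ = r • Complex.exp (θ * Complex.I) := by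
    rw [circleMap_zero, Complex.real_smul]
  rw [norm_circleMap_zero, sq_abs] at laplacian_eq
  nth_rw 1 2 [radial_eq] at laplacian_eq
  nth_rw 3 [radial_eq]
  simp only [map_smul, smul_apply] at laplacian_eq ⊢
  simp only [Complex.real_smul, Complex.ofReal_pow] at laplacian_eq ⊢
  linear_combination laplacian_eq + r ^ 2 * h.laplacian_add _ hz

lemma circleFourierCoeff_eq {r : ℝ} (h : HelmholtzOn k u Ω) (hΩ : IsOpen Ω) (hr : 0 ≤ r)
    (hrΩ : Metric.sphere c r ⊆ Ω) (n : ℤ) :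
    r ^ 2 * fourierCoeffOn Real.two_pi_pos (fun θ => fderiv ℝ (fderiv ℝ u) (circleMap c r θ)
          (Complex.exp (θ * Complex.I)) (Complex.exp (θ * Complex.I))) n +
        r * fourierCoeffOn Real.two_pi_pos
          (fun θ => fderiv ℝ u (circleMap c r θ) (Complex.exp (θ * Complex.I))) n +
        k ^ 2 * r ^ 2 * circleFourierCoeff u c n r =
      n ^ 2 * circleFourierCoeff u c n r := by
  have circleMap_mem : ∀ θ, circleMap c r θ ∈ Ω := fun θ => hrΩ (circleMap_mem_sphere c hr θ)
  have exp_continuous : Continuous fun θ : ℝ => Complex.exp (θ * Complex.I) := by fun_prop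
  have u_continuous := continuous_comp_circleMap hr (h.contDiffOn.continuousOn.mono hrΩ)
  have fderiv_continuous :=
    continuous_comp_circleMap hr ((h.contDiffOn_fderiv hΩ).continuousOn.mono hrΩ)
  have fderiv_fderiv_continuous := continuous_comp_circleMap hr
    (((h.contDiffOn_fderiv hΩ).continuousOn_fderiv_of_isOpen hΩ le_rfl).mono hrΩ)
  have uθ_continuous := fderiv_continuous.clm_apply
    ((continuous_circleMap 0 r).mul (continuous_const (y := Complex.I)))
  have integrable {g : ℝ → ℂ} (hg : Continuous g) : IntervalIntegrable g volume 0 (2 * Real.pi) :=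
    hg.intervalIntegrable _ _
  have urr_integrable := (integrable ((fderiv_fderiv_continuous.clm_apply
    exp_continuous).clm_apply exp_continuous)).const_mul (-r ^ 2 : ℂ)
  have ur_integrable := (integrable (fderiv_continuous.clm_apply exp_continuous)).const_mul (-r : ℂ)
  have ku_integrable := (integrable u_continuous).const_mul (-(k ^ 2 * r ^ 2))
  have coeff_uθ := fourierCoeffOn_two_pi_deriv
    (fun θ _ => hasDerivAt_comp_circleMap_angle (h.differentiableAt hΩ (circleMap_mem θ)))
    (integrable uθ_continuous) (by simp [circleMap]) n
  have coeff_uθθ := fourierCoeffOn_two_pi_deriv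
    (fun θ _ => h.hasDerivAt_fderiv_angle hΩ (circleMap_mem θ))
    (urr_integrable.add (ur_integrable.add ku_integrable)) (by simp [circleMap]) n
  rw [coeff_uθ, fourierCoeffOn_fun_add _ urr_integrable (ur_integrable.add ku_integrable),
    fourierCoeffOn_fun_add _ ur_integrable ku_integrable, fourierCoeffOn.const_mul,
    fourierCoeffOn.const_mul, fourierCoeffOn.const_mul] at coeff_uθθ
  simp only [circleFourierCoeff]
  linear_combination -coeff_uθθ - n ^ 2 * fourierCoeffOn Real.two_pi_pos
    (fun θ => u (circleMap c r θ)) n * Complex.I_sq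

lemma solvesBessel_circleFourierCoeff (h : HelmholtzOn k u Ω) (hΩ : IsOpen Ω) (hs : IsOpen s)
    (hs₀ : s ⊆ Ioi 0) (hsΩ : ∀ r ∈ s, Metric.sphere c r ⊆ Ω) (n : ℤ) :
    SolvesBessel n k s (circleFourierCoeff u c n) (fun r => fourierCoeffOn Real.two_pi_pos
      (fun θ => fderiv ℝ u (circleMap c r θ) (Complex.exp (θ * Complex.I))) n) := by
  let e : ℝ → ℂ := fun θ => Complex.exp (θ * Complex.I)
  let ur : ℝ → ℝ → ℂ := fun r θ => fderiv ℝ u (circleMap c r θ) (e θ)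
  let urr : ℝ → ℝ → ℂ := fun r θ => fderiv ℝ (fderiv ℝ u) (circleMap c r θ) (e θ) (e θ)
  have circleMap_mem : ∀ r ∈ s, ∀ θ, circleMap c r θ ∈ Ω := fun r hr θ =>
    hsΩ r hr (circleMap_mem_sphere c (mem_Ioi.1 (hs₀ hr)).le θ)
  have e_continuousOn : ContinuousOn (fun p : ℝ × ℝ => e p.2) (s ×ˢ univ) := by fun_prop
  have ur_continuousOn : ContinuousOn ur.uncurry (s ×ˢ univ) :=
    (continuousOn_comp_circleMap (h.contDiffOn_fderiv hΩ).continuousOn hs₀ hsΩ).clm_apply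
      e_continuousOn
  have urr_continuousOn : ContinuousOn urr.uncurry (s ×ˢ univ) :=
    ((continuousOn_comp_circleMap
      ((h.contDiffOn_fderiv hΩ).continuousOn_fderiv_of_isOpen hΩ le_rfl) hs₀ hsΩ).clm_apply
        e_continuousOn).clm_apply e_continuousOn
  have mono_uIcc := prod_mono_right (s := s) (subset_univ (uIcc 0 (2 * Real.pi)))
  constructor <;> intro r hr
  · exact hasDerivAt_fourierCoeffOn Real.two_pi_pos hs
      (fun r hr => (continuous_comp_circleMap (mem_Ioi.1 (hs₀ hr)).le
        (h.contDiffOn.continuousOn.mono (hsΩ r hr))).continuousOn)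
      (ur_continuousOn.mono mono_uIcc)
      (fun r hr θ _ => hasDerivAt_comp_circleMap_radius
        (h.differentiableAt hΩ (circleMap_mem r hr θ))) n hr
  · refine (hasDerivAt_fourierCoeffOn Real.two_pi_pos hs
      (fun r hr => (ur_continuousOn.comp_continuous (.prodMk_right r)
        fun θ => ⟨hr, mem_univ θ⟩).continuousOn) (urr_continuousOn.mono mono_uIcc)
      (fun r hr θ _ => hasDerivAt_fderiv_circleMap_radius
        (h.differentiableAt_fderiv hΩ (circleMap_mem r hr θ))) n hr).congr_deriv ?_
    have r_ne : (r : ℂ) ≠ 0 := Complex.ofReal_ne_zero.2 (mem_Ioi.1 (hs₀ hr)).ne'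
    have coeff_eq := h.circleFourierCoeff_eq hΩ (mem_Ioi.1 (hs₀ hr)).le (hsΩ r hr) n
    simp only [smul_eq_mul]
    field_simp
    linear_combination coeff_eq

lemma eqOn_zero_ball_of_eventuallyEq_zero {R : ℝ} (h : HelmholtzOn k u (Metric.ball c R))
    (hu : u =ᶠ[𝓝 c] 0) : EqOn u 0 (Metric.ball c R) := by
  intro z hz
  rcases eq_or_ne z c with rfl | hzc
  · exact hu.eq_of_nhds
  have sphere_subset : ∀ r ∈ Ioo 0 R, Metric.sphere c r ⊆ Metric.ball c R := fun r hr =>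
    Metric.sphere_subset_ball hr.2
  have dist_mem : dist z c ∈ Ioo 0 R := ⟨dist_pos.2 hzc, hz⟩
  obtain ⟨ε, hε, hε_ball⟩ := Metric.eventually_nhds_iff_ball.1 hu
  obtain ⟨r₀, r₀_pos, r₀_lt⟩ := exists_between (lt_min hε (dist_mem.1.trans dist_mem.2))
  have coeff_eventually_zero (n : ℤ) : circleFourierCoeff u c n =ᶠ[𝓝 r₀] 0 := by
    filter_upwards [Ioo_mem_nhds r₀_pos (r₀_lt.trans_le (min_le_left _ _))] with r hr
    exact circleFourierCoeff_eq_zero hr.1.le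
      (fun w hw => hε_ball w (Metric.sphere_subset_ball hr.2 hw)) n
  have coeff_zero (n : ℤ) : circleFourierCoeff u c n (dist z c) = 0 :=
    (h.solvesBessel_circleFourierCoeff Metric.isOpen_ball isOpen_Ioo (fun r hr => hr.1)
      sphere_subset n).eq_zero_of_eventuallyEq_zero ordConnected_Ioo (fun r hr => hr.1)
      ⟨r₀_pos, r₀_lt.trans_le (min_le_right _ _)⟩ (coeff_eventually_zero n) dist_mem
  exact eqOn_zero_of_circleFourierCoeff_eq_zero
    (h.contDiffOn.continuousOn.mono (sphere_subset _ dist_mem)) coeff_zero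
    (Metric.mem_sphere.2 rfl)

lemma eqOn_zero_of_eventuallyEq_zero (h : HelmholtzOn k u Ω) (hΩ : IsOpen Ω)
    (hΩ_conn : IsPreconnected Ω) (hc : c ∈ Ω) (hu : u =ᶠ[𝓝 c] 0) : EqOn u 0 Ω := by
  suffices Ω ⊆ interior {z | u z = 0} from this.trans interior_subset
  refine hΩ_conn.subset_of_closure_inter_subset isOpen_interior
    ⟨c, hc, mem_interior_iff_mem_nhds.2 hu⟩ ?_
  rintro z ⟨z_mem_closure, hz⟩
  obtain ⟨ρ, hρ, ball_subset⟩ := Metric.isOpen_iff.1 hΩ z hz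
  obtain ⟨w, w_mem, dist_lt⟩ := Metric.mem_closure_iff.1 z_mem_closure (ρ / 2) (half_pos hρ)
  have ball_w_subset : Metric.ball w (ρ / 2) ⊆ Ω :=
    (Metric.ball_subset_ball' (by rw [dist_comm]; linarith)).trans ball_subset
  have u_zero := (h.mono ball_w_subset).eqOn_zero_ball_of_eventuallyEq_zero
    (mem_interior_iff_mem_nhds.1 w_mem)
  exact mem_interior.2 ⟨_, u_zero, Metric.isOpen_ball, dist_lt⟩

end HelmholtzOn

end Helmholtz

section ArcLength

-- Jordan's inequality `|θ| ≤ π |sin (θ / 2)|` makes `circleMap` antilipschitz on half circles. The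
-- resulting bound of arc length by `μH[1]` loses a constant factor, which the decay absorbs.

lemma map_restrict_hausdorffMeasure_le {X Y : Type*} [EMetricSpace X] [MeasurableSpace X]
    [BorelSpace X] [EMetricSpace Y] [MeasurableSpace Y] [BorelSpace Y] {K : NNReal} {g : X → Y}
    {s : Set X} {d : ℝ} (hg : Measurable g) (hgs : AntilipschitzWith K (s.domRestrict g))
    (hd : 0 ≤ d) :
    ((μH[d]).restrict s).map g ≤ (K : ENNReal) ^ d • (μH[d]).restrict (g '' s) := by
  refine Measure.le_iff.2 fun t ht => ?_
  calc ((μH[d]).restrict s).map g t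
      = μH[d] (Subtype.val '' (s.domRestrict g ⁻¹' t)) := by
        rw [Measure.map_apply hg ht, Measure.restrict_apply (hg ht), domRestrict_eq, preimage_comp,
          Subtype.image_preimage_coe, inter_comm]
    _ = μH[d] (s.domRestrict g ⁻¹' t) := isometry_subtype_coe.hausdorffMeasure_image (.inl hd) _
    _ ≤ (K : ENNReal) ^ d * μH[d] (s.domRestrict g '' (s.domRestrict g ⁻¹' t)) :=
        hgs.le_hausdorffMeasure_image hd _
    _ ≤ (K : ENNReal) ^ d * μH[d] (t ∩ g '' s) := by
        gcongr
        rintro _ ⟨x, hx, rfl⟩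
        exact ⟨hx, mem_image_of_mem g x.2⟩
    _ = ((K : ENNReal) ^ d • (μH[d]).restrict (g '' s)) t := by
        rw [Measure.smul_apply, Measure.restrict_apply ht, smul_eq_mul]

variable {c : ℂ} {r : ℝ}

lemma abs_sub_le_mul_dist_circleMap (hr : 0 < r) {θ φ : ℝ} (h : |θ - φ| < Real.pi) :
    |θ - φ| ≤ Real.pi / (2 * r) * dist (circleMap c r θ) (circleMap c r φ) := by
  have angle_eq : InnerProductGeometry.angle (Complex.exp (θ * Complex.I))
      (Complex.exp (φ * Complex.I)) = |θ - φ| := by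
    rw [Complex.angle_exp_exp, (toIocMod_eq_self _).2]
    exact ⟨(abs_lt.1 h).1, by linarith [(abs_lt.1 h).2]⟩
  have dist_eq : dist (circleMap c r θ) (circleMap c r φ) =
      r * ‖Complex.exp (θ * Complex.I) - Complex.exp (φ * Complex.I)‖ := by
    rw [circleMap, circleMap, dist_add_left, dist_eq_norm, ← mul_sub, norm_mul, Complex.norm_real,
      Real.norm_of_nonneg hr.le]
  calc |θ - φ|
      ≤ Real.pi / 2 * ‖Complex.exp (θ * Complex.I) - Complex.exp (φ * Complex.I)‖ :=
        angle_eq ▸ Complex.angle_le_mul_norm_sub (Complex.norm_exp_ofReal_mul_I θ)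
          (Complex.norm_exp_ofReal_mul_I φ)
    _ = _ := by rw [dist_eq]; field_simp

lemma map_circleMap_restrict_Ioc_add_pi_le (hr : 0 < r) (a : ℝ) :
    (volume.restrict (Ioc a (a + Real.pi))).map (circleMap c r) ≤
      ENNReal.ofReal (Real.pi / (2 * r)) • (μH[1]).restrict (Metric.sphere c r) := by
  have antilipschitz : AntilipschitzWith (Real.pi / (2 * r)).toNNReal
      ((Ioc a (a + Real.pi)).domRestrict (circleMap c r)) :=
    .of_le_mul_dist fun θ φ => by
      rw [Real.coe_toNNReal _ (by positivity)]
      exact abs_sub_le_mul_dist_circleMap hr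
        (abs_lt.2 ⟨by linarith [θ.2.1, φ.2.2], by linarith [θ.2.2, φ.2.1]⟩)
  have image_subset : circleMap c r '' Ioc a (a + Real.pi) ⊆ Metric.sphere c r :=
    image_subset_iff.2 fun θ _ => circleMap_mem_sphere c hr.le θ
  have map_le := map_restrict_hausdorffMeasure_le (measurable_circleMap c r) antilipschitz
    zero_le_one
  rw [hausdorffMeasure_real, ENNReal.rpow_one] at map_le
  exact map_le.trans (by gcongr; rfl)

lemma map_circleMap_restrict_Ioc_le (hr : 0 < r) :
    (volume.restrict (Ioc 0 (2 * Real.pi))).map (circleMap c r) ≤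
      ENNReal.ofReal (Real.pi / r) • (μH[1]).restrict (Metric.sphere c r) := by
  have Ioc_eq : Ioc 0 (2 * Real.pi) = Ioc 0 (0 + Real.pi) ∪ Ioc Real.pi (Real.pi + Real.pi) := by
    rw [zero_add, Ioc_union_Ioc_eq_Ioc Real.pi_pos.le (by linarith [Real.pi_pos]), two_mul]
  have measurable := measurable_circleMap c r
  calc (volume.restrict (Ioc 0 (2 * Real.pi))).map (circleMap c r)
      ≤ (volume.restrict (Ioc 0 (0 + Real.pi)) +
          volume.restrict (Ioc Real.pi (Real.pi + Real.pi))).map (circleMap c r) :=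
        Measure.map_mono (Ioc_eq ▸ Measure.restrict_union_le _ _) measurable
    _ ≤ ENNReal.ofReal (Real.pi / (2 * r)) • (μH[1]).restrict (Metric.sphere c r) +
          ENNReal.ofReal (Real.pi / (2 * r)) • (μH[1]).restrict (Metric.sphere c r) := by
        rw [Measure.map_add _ _ measurable]
        exact add_le_add (map_circleMap_restrict_Ioc_add_pi_le hr _)
          (map_circleMap_restrict_Ioc_add_pi_le hr _)
    _ = _ := by
        rw [← add_smul, ← ENNReal.ofReal_add (by positivity) (by positivity)]
        congr 2
        field_simp
        norm_num

lemma hausdorffMeasure_sphere_lt_top (c : ℂ) (r : ℝ) : μH[1] (Metric.sphere c r) < ⊤ := by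
  rcases lt_or_ge r 0 with hr | hr
  · simp [Metric.sphere_eq_empty_of_neg hr]
  rw [← abs_of_nonneg hr, ← image_circleMap_Ioc]
  refine ((lipschitzWith_circleMap c r).hausdorffMeasure_image_le zero_le_one _).trans_lt ?_
  rw [hausdorffMeasure_real, Real.volume_Ioc, ENNReal.rpow_one]
  exact ENNReal.mul_lt_top ENNReal.coe_lt_top ENNReal.ofReal_lt_top

lemma intervalIntegral_comp_circleMap_le (hr : 0 < r) {w : ℂ → ℝ} (hw₀ : ∀ z, 0 ≤ w z)
    (hw : ContinuousOn w (Metric.sphere c r)) :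
    ∫ θ in 0..2 * Real.pi, w (circleMap c r θ) ≤
      Real.pi / r * ∫ z in Metric.sphere c r, w z ∂μH[1] := by
  have w_integrable : Integrable w
      (ENNReal.ofReal (Real.pi / r) • (μH[1]).restrict (Metric.sphere c r)) :=
    Integrable.smul_measure (hw.integrableOn_of_subset_isCompact (isCompact_sphere c r)
      Metric.isClosed_sphere.measurableSet subset_rfl (hausdorffMeasure_sphere_lt_top c r).ne)
      ENNReal.ofReal_ne_top
  have measure_le := map_circleMap_restrict_Ioc_le (c := c) hr
  have integral_le := integral_mono_measure measure_le (.of_forall hw₀) w_integrable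
  rwa [integral_smul_measure, integral_map (measurable_circleMap c r).aemeasurable
    (w_integrable.mono_measure measure_le).aestronglyMeasurable, ENNReal.toReal_ofReal
    (by positivity), ← intervalIntegral.integral_of_le Real.two_pi_pos.le, smul_eq_mul]
    at integral_le

lemma mul_norm_sq_circleFourierCoeff_le {u : ℂ → ℂ} (hr : 0 < r)
    (hu : ContinuousOn u (Metric.sphere c r)) (n : ℤ) :
    r * ‖circleFourierCoeff u c n r‖ ^ 2 ≤ 2⁻¹ * ∫ z in Metric.sphere c r, ‖u z‖ ^ 2 ∂μH[1] := by
  have bessel_inequality := norm_sq_fourierCoeffOn_le Real.two_pi_pos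
    (memLp_two_restrict_Ioc_of_continuousOn
      (continuous_comp_circleMap hr.le hu).continuousOn) n
  have integral_le := intervalIntegral_comp_circleMap_le hr (fun z => sq_nonneg ‖u z‖)
    (hu.norm.pow 2)
  calc r * ‖circleFourierCoeff u c n r‖ ^ 2
      ≤ r * ((2 * Real.pi - 0)⁻¹ *
          (Real.pi / r * ∫ z in Metric.sphere c r, ‖u z‖ ^ 2 ∂μH[1])) := by
        refine mul_le_mul_of_nonneg_left (bessel_inequality.trans ?_) hr.le
        exact mul_le_mul_of_nonneg_left integral_le (by simp [Real.pi_pos.le])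
    _ = _ := by field_simp; ring

end ArcLength

section Rellich

open InnerProductSpace Laplacian

lemma HelmholtzOn.eqOn_zero_of_tendsto {k : ℂ} {u : ℂ → ℂ} {Ω : Set ℂ} (h : HelmholtzOn k u Ω)
    (hΩ : IsOpen Ω) (hΩ_conn : IsPreconnected Ω) (hΩ_bdd : Bornology.IsBounded Ωᶜ) (hk : k ≠ 0)
    (hu : Tendsto (fun r => Real.exp (2 * |k.im| * r) *
      ∫ z in Metric.sphere (0 : ℂ) r, ‖u z‖ ^ 2 ∂μH[1]) atTop (𝓝 0)) : EqOn u 0 Ω := by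
  obtain ⟨a, ha, compl_subset⟩ := hΩ_bdd.subset_closedBall_lt 0 0
  have sphere_subset : ∀ r ∈ Ioi a, Metric.sphere (0 : ℂ) r ⊆ Ω := fun r hr z hz =>
    not_notMem.1 fun hzΩ => ((Metric.mem_closedBall.1 (compl_subset hzΩ)).trans_lt hr).ne hz
  have u_continuousOn : ∀ r ∈ Ioi a, ContinuousOn u (Metric.sphere 0 r) := fun r hr =>
    h.contDiffOn.continuousOn.mono (sphere_subset r hr)
  have coeff_tendsto (n : ℤ) : Tendsto (fun r => Real.exp (2 * |k.im| * r) *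
      (r * ‖circleFourierCoeff u 0 n r‖ ^ 2)) atTop (𝓝 0) := by
    refine squeeze_zero' ?_ ?_ (by simpa using hu.const_mul 2⁻¹)
    · filter_upwards [eventually_ge_atTop 0] with r hr
      positivity
    · filter_upwards [eventually_gt_atTop a] with r hr
      rw [mul_left_comm 2⁻¹]
      exact mul_le_mul_of_nonneg_left (mul_norm_sq_circleFourierCoeff_le (ha.trans hr)
        (u_continuousOn r hr) n) (Real.exp_nonneg _)
  have coeff_zero : ∀ r ∈ Ioi a, ∀ n, circleFourierCoeff u 0 n r = 0 := fun r hr n =>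
    (h.solvesBessel_circleFourierCoeff hΩ isOpen_Ioi (Ioi_subset_Ioi ha.le) sphere_subset
      n).eq_zero_of_tendsto hk ha (coeff_tendsto n) hr
  have u_zero : EqOn u 0 {z | a < dist z 0} := fun z hz =>
    eqOn_zero_of_circleFourierCoeff_eq_zero (u_continuousOn _ hz) (coeff_zero _ hz) rfl
  have exterior_open : IsOpen {z : ℂ | a < dist z 0} := isOpen_lt (by fun_prop) (by fun_prop)
  have point_mem : ((a + 1 : ℝ) : ℂ) ∈ {z : ℂ | a < dist z 0} := by
    simpa only [mem_ofPred_eq, dist_zero_right, Complex.norm_real, Real.norm_eq_abs] using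
      (lt_add_one a).trans_le (le_abs_self _)
  exact h.eqOn_zero_of_eventuallyEq_zero hΩ hΩ_conn (sphere_subset _ point_mem rfl)
    (u_zero.eventuallyEq_of_mem (exterior_open.mem_nhds point_mem))

lemma laplacian_comp_linearIsometryEquiv {E F G : Type*} [NormedAddCommGroup E]
    [InnerProductSpace ℝ E] [FiniteDimensional ℝ E] [NormedAddCommGroup F] [InnerProductSpace ℝ F]
    [FiniteDimensional ℝ F] [NormedAddCommGroup G] [NormedSpace ℝ G] (e : E ≃ₗᵢ[ℝ] F) (u : F → G)
    (x : E) : Δ (u ∘ e) x = Δ u (e x) := by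
  have iteratedFDeriv_eq : iteratedFDeriv ℝ 2 (u ∘ e) x =
      (iteratedFDeriv ℝ 2 u (e x)).compContinuousLinearMap
        fun _ => e.toContinuousLinearEquiv := by
    rw [← iteratedFDerivWithin_univ, ← iteratedFDerivWithin_univ]
    exact e.toContinuousLinearEquiv.iteratedFDerivWithin_comp_right u uniqueDiffOn_univ
      (mem_univ _) 2
  simp only [laplacian_eq_iteratedFDeriv_orthonormalBasis _ (stdOrthonormalBasis ℝ E),
    laplacian_eq_iteratedFDeriv_orthonormalBasis _ ((stdOrthonormalBasis ℝ E).map e),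
    iteratedFDeriv_eq]
  refine Finset.sum_congr rfl fun i _ => ?_
  rw [ContinuousMultilinearMap.compContinuousLinearMap_apply]
  congr 1
  ext j
  fin_cases j <;> simp

lemma HelmholtzOn.comp_linearIsometryEquiv {E F : Type*} [NormedAddCommGroup E]
    [InnerProductSpace ℝ E] [FiniteDimensional ℝ E] [NormedAddCommGroup F] [InnerProductSpace ℝ F]
    [FiniteDimensional ℝ F] {k : ℂ} {u : F → ℂ} {Ω : Set F} (h : HelmholtzOn k u Ω)
    (e : E ≃ₗᵢ[ℝ] F) : HelmholtzOn k (u ∘ e) (e ⁻¹' Ω) where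
  contDiffOn := h.contDiffOn.comp e.contDiff.contDiffOn (mapsTo_preimage e Ω)
  laplacian_add x hx := by
    rw [laplacian_comp_linearIsometryEquiv]
    exact h.laplacian_add (e x) hx

lemma setIntegral_preimage_isometryEquiv {X Y G : Type*} [EMetricSpace X] [MeasurableSpace X]
    [BorelSpace X] [EMetricSpace Y] [MeasurableSpace Y] [BorelSpace Y] [NormedAddCommGroup G]
    [NormedSpace ℝ G] (e : X ≃ᵢ Y) (d : ℝ) (g : Y → G) (s : Set Y) :
    ∫ x in e ⁻¹' s, g (e x) ∂μH[d] = ∫ y in s, g y ∂μH[d] :=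
  (e.measurePreserving_hausdorffMeasure d).setIntegral_preimage_emb
    e.toHomeomorph.measurableEmbedding g s

lemma laplacian2_eq_laplacian {u : EuclideanSpace ℝ (Fin 2) → ℂ} {x : EuclideanSpace ℝ (Fin 2)}
    (hu : ContDiffAt ℝ 2 u x) : laplacian2 u x = Δ u x := by
  have fderiv_differentiableAt : DifferentiableAt ℝ (fderiv ℝ u) x :=
    (hu.fderiv_right (m := 1) (by norm_num)).differentiableAt one_ne_zero
  rw [laplacian_eq_iteratedFDeriv_orthonormalBasis u (EuclideanSpace.basisFun (Fin 2) ℝ),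
    laplacian2]
  refine Finset.sum_congr rfl fun i _ => ?_
  rw [iteratedFDeriv_two_apply, fderiv_clm_apply fderiv_differentiableAt
    (differentiableAt_const _)]
  simp

theorem generalized_rellich_I_2d_general {Ω : Set (EuclideanSpace ℝ (Fin 2))} {k : ℂ}
    {u : EuclideanSpace ℝ (Fin 2) → ℂ} (hΩ : IsOpen Ω) (hΩ_conn : IsPreconnected Ω)
    (hΩ_bdd : Bornology.IsBounded Ωᶜ) (hk : k ≠ 0) (hu_smooth : ContDiffOn ℝ 2 u Ω)
    (hu_helmholtz : ∀ x ∈ Ω, laplacian2 u x + k ^ 2 * u x = 0)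
    (hdecay : Tendsto (fun r : ℝ => Real.exp (2 * |k.im| * r) *
      ∫ x in Metric.sphere (0 : EuclideanSpace ℝ (Fin 2)) r, ‖u x‖ ^ 2 ∂μH[1]) atTop (𝓝 0)) :
    ∀ x ∈ Ω, u x = 0 := by
  let e : ℂ ≃ₗᵢ[ℝ] EuclideanSpace ℝ (Fin 2) := Complex.orthonormalBasisOneI.repr
  have helmholtz : HelmholtzOn k u Ω := ⟨hu_smooth, fun x hx =>
    laplacian2_eq_laplacian (hu_smooth.contDiffAt (hΩ.mem_nhds hx)) ▸ hu_helmholtz x hx⟩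
  have integral_eq (r : ℝ) : ∫ z in Metric.sphere (0 : ℂ) r, ‖u (e z)‖ ^ 2 ∂μH[1] =
      ∫ x in Metric.sphere (0 : EuclideanSpace ℝ (Fin 2)) r, ‖u x‖ ^ 2 ∂μH[1] := by
    rw [← setIntegral_preimage_isometryEquiv e.toIsometryEquiv]
    simp
  have compl_bdd : Bornology.IsBounded (e ⁻¹' Ω)ᶜ := by
    rw [← preimage_compl]
    exact e.antilipschitz.isBounded_preimage hΩ_bdd
  have zero := (helmholtz.comp_linearIsometryEquiv e).eqOn_zero_of_tendsto
    (hΩ.preimage e.continuous) (e.toHomeomorph.isPreconnected_preimage.2 hΩ_conn) compl_bdd hk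
    (by simpa only [Function.comp_apply, integral_eq] using hdecay)
  intro x hx
  simpa using zero (show e.symm x ∈ e ⁻¹' Ω by simpa using hx)

end Rellich

/-- Generalized Rellich's Lemma I in two dimensions. -/
theorem generalized_rellich_I_2d
    (D : Set (EuclideanSpace ℝ (Fin 2))) (hD_open : IsOpen D)
    (hD_bounded : Bornology.IsBounded D)
    (hD_conn : IsConnected ((closure D)ᶜ))
    (k : ℂ) (hk : ¬ (k.im = 0 ∧ k.re ≤ 0))
    (u : EuclideanSpace ℝ (Fin 2) → ℂ)
    (hu_smooth : ContDiffOn ℝ 2 u ((closure D)ᶜ))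
    (hu_helmholtz : ∀ x ∈ (closure D)ᶜ, laplacian2 u x + k ^ 2 * u x = 0)
    (hdecay :
      Filter.Tendsto
        (fun r : ℝ =>
          Real.exp (2 * |k.im| * r) *
            ∫ x in Metric.sphere (0 : EuclideanSpace ℝ (Fin 2)) r, ‖u x‖ ^ 2 ∂μH[1])
        Filter.atTop (nhds 0)) :
    ∀ x ∈ (closure D)ᶜ, u x = 0 :=
  generalized_rellich_I_2d_general isClosed_closure.isOpen_compl hD_conn.isPreconnected
    (by simpa using hD_bounded.closure) (by rintro rfl; simp at hk) hu_smooth hu_helmholtz hdecay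
end

section
/- Let k ∈ ℂ with Im k > 0, let c ∈ ℝ, and let α, β ∈ ℂ. If lim_{r→∞} ( |α|² + 2 e^{2(Im k) r} Re(α · conj(β) · e^{2i((Re k) r − c)}) + e^{4(Im k) r} |β|² ) = 0, where the limit is taken as r → ∞ over real r, then α = 0 and β = 0. -/
/-!
The expression in the limit is `‖α + exp (-2i(kr - c)) • β‖ ^ 2`: it is `e ^ (2 (Im k) r)` times
the squared norm of the wave `exp (i(kr - c)) • α + exp (-i(kr - c)) • β`. The modulus
`e ^ (2 (Im k) r)` of the coefficient of `β` tends to infinity, so the sum can only converge if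
`β = 0`, and then its limit is `α`.
-/

open Filter Topology Bornology

theorem eq_and_eq_zero_of_tendsto_add_smul {ι 𝕜 E : Type*} [NormedDivisionRing 𝕜]
    [AddCommGroup E] [TopologicalSpace E] [IsTopologicalAddGroup E] [T2Space E]
    [Module 𝕜 E] [ContinuousSMul 𝕜 E] {l : Filter ι} [l.NeBot] {g : ι → 𝕜} {x y z : E}
    (hg : Tendsto g l (cobounded 𝕜)) (h : Tendsto (fun i ↦ x + g i • y) l (𝓝 z)) :
    x = z ∧ y = 0 := by
  have hy : y = 0 := by
    have hlim : Tendsto (fun i ↦ (g i)⁻¹ • ((x + g i • y) - x)) l (𝓝 0) := by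
      simpa only [Function.comp_apply, zero_smul] using
        (tendsto_inv₀_cobounded.comp hg).smul (h.sub_const x)
    refine tendsto_nhds_unique (tendsto_const_nhds.congr' ?_) hlim
    filter_upwards [hg.eventually_ne_cobounded 0] with i hi
    rw [add_sub_cancel_left, inv_smul_smul₀ hi]
  have hx : Tendsto (fun _ ↦ x) l (𝓝 z) := by
    simpa only [hy, smul_zero, add_zero] using h
  exact ⟨tendsto_nhds_unique tendsto_const_nhds hx, hy⟩

section Phase

variable (k : ℂ) (c r : ℝ)

theorem norm_exp_neg_two_mul_I_mul :
    ‖Complex.exp (-(2 * Complex.I * (k * r - c)))‖ = Real.exp (2 * k.im * r) := by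
  rw [Complex.norm_exp]
  congr 1
  simp [mul_assoc]

theorem conj_exp_neg_two_mul_I_mul :
    (starRingEnd ℂ) (Complex.exp (-(2 * Complex.I * (k * r - c)))) =
      (Real.exp (2 * k.im * r) : ℂ) * Complex.exp (2 * Complex.I * (k.re * r - c)) := by
  rw [← Complex.exp_conj, Complex.ofReal_exp, ← Complex.exp_add]
  congr 1
  apply Complex.ext <;> simp [mul_assoc]

theorem norm_sq_add_exp_smul {E : Type*} [SeminormedAddCommGroup E] [InnerProductSpace ℂ E]
    (α β : E) :
    ‖α + Complex.exp (-(2 * Complex.I * (k * r - c))) • β‖ ^ 2 =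
      ‖α‖ ^ 2 +
        2 * Real.exp (2 * k.im * r) *
          (inner ℂ β α * Complex.exp (2 * Complex.I * (k.re * r - c))).re +
        Real.exp (4 * k.im * r) * ‖β‖ ^ 2 := by
  have cross_term :
      (inner ℂ (Complex.exp (-(2 * Complex.I * (k * r - c))) • β) α).re =
        Real.exp (2 * k.im * r) *
          (inner ℂ β α * Complex.exp (2 * Complex.I * (k.re * r - c))).re := by
    rw [inner_smul_left, conj_exp_neg_two_mul_I_mul, mul_assoc, Complex.re_ofReal_mul,
      mul_comm (Complex.exp _)]
  have exp_sq : Real.exp (2 * k.im * r) ^ 2 = Real.exp (4 * k.im * r) := by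
    rw [← Real.exp_nat_mul]
    congr 1
    push_cast
    ring
  rw [add_comm α, norm_add_sq (𝕜 := ℂ), RCLike.re_eq_complex_re, cross_term, norm_smul, mul_pow,
    norm_exp_neg_two_mul_I_mul, exp_sq]
  ring

variable {k} in
theorem tendsto_exp_neg_two_mul_I_mul_cobounded (hk : 0 < k.im) :
    Tendsto (fun r : ℝ ↦ Complex.exp (-(2 * Complex.I * (k * r - c)))) atTop (cobounded ℂ) := by
  rw [← tendsto_norm_atTop_iff_cobounded]
  simp only [norm_exp_neg_two_mul_I_mul]
  exact Real.tendsto_exp_atTop.comp (tendsto_id.const_mul_atTop (by positivity))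

end Phase

theorem rellich_limit_identity_im_pos_general {E : Type*} [NormedAddCommGroup E]
    [InnerProductSpace ℂ E] {l : Filter ℝ} [l.NeBot] (hl : l ≤ atTop)
    (k : ℂ) (hk : 0 < k.im) (c : ℝ) (α β : E)
    (h : Tendsto
      (fun r : ℝ ↦
        ‖α‖ ^ 2 +
          2 * Real.exp (2 * k.im * r) *
            (inner ℂ β α * Complex.exp (2 * Complex.I * (k.re * r - c))).re +
          Real.exp (4 * k.im * r) * ‖β‖ ^ 2)
      l (𝓝 0)) :
    α = 0 ∧ β = 0 := by
  simp only [← norm_sq_add_exp_smul] at h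
  have hsum : Tendsto (fun r : ℝ ↦ α + Complex.exp (-(2 * Complex.I * (k * r - c))) • β)
      l (𝓝 0) := by
    rw [tendsto_zero_iff_norm_tendsto_zero]
    simpa using h.sqrt
  exact eq_and_eq_zero_of_tendsto_add_smul
    ((tendsto_exp_neg_two_mul_I_mul_cobounded c hk).mono_left hl) hsum

/-- The case `Im k > 0` of the limit identity (eq. (2.14)). -/
theorem rellich_limit_identity_im_pos
    (k : ℂ) (hk : 0 < k.im) (c : ℝ) (α β : ℂ)
    (h : Filter.Tendsto
      (fun r : ℝ =>
        ‖α‖ ^ 2 +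
          2 * Real.exp (2 * k.im * r) *
            (α * (starRingEnd ℂ) β *
              Complex.exp (2 * Complex.I * ((k.re : ℂ) * (r : ℂ) - (c : ℂ)))).re +
          Real.exp (4 * k.im * r) * ‖β‖ ^ 2)
      Filter.atTop (nhds 0)) :
    α = 0 ∧ β = 0 :=
  rellich_limit_identity_im_pos_general le_rfl k hk c α β h
end
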